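/- arXiv:math/0406441 — 2 statements merged into one kernel-verified Lean document; each statement's English description precedes it below -/
import Mathlib

section
/- Let μ be an infinite cardinal, let κ = cf(μ), and let 𝒜 be a μ-almost disjoint family of size κ. Then there exists a μ-mad family 𝒜′ ⊇ 𝒜 such that |𝒜′| = 𝔞_μ and ⋃𝒜′ = ⋃𝒜. -/
/-!
Put `κ = cf μ`. Zorn's lemma extends `𝒜` to a `μ`-mad family on `⋃₀ 𝒜` (`exists_mad_extension`),
so `MADSet μ` is nonempty and there is a nontrivial `μ`-mad family `ℬ` of least size `𝔞_μ`.

Enumerate `𝒜 = {A i | i < κ}` and pick distinct `B i ∈ ℬ` for `i < κ`. A union of fewer than `κ`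
sets of size `< μ` has size `< μ` (`mk_iUnion_lt_of_lt_cof`), so the disjointed pieces
`B i \ ⋃ j < i, B j` still have size `μ`. Injecting each `A i \ ⋃ j < i, A j` into the corresponding
piece gives a map `f`, injective on `⋃₀ 𝒜`, for which the pullback of `B i` agrees with `A i` up to
a set of size `< μ` (`exists_matching`). Hence `𝒜`, together with those pullbacks of the remaining
members of `ℬ` that have size `μ`, is again `μ`-mad: a set of size `μ` in `⋃₀ 𝒜` has an image which
meets some member of `ℬ` in `μ` points. This family has at most `κ + 𝔞_μ = 𝔞_μ` members, and at
least `𝔞_μ` by minimality.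
-/

universe u
open Cardinal

/-- A family `𝒜` of subsets of `α` is `μ`-almost disjoint: its union has size `μ`,
each member has size `μ`, and distinct members intersect in a set of size `< μ`. -/
def IsADFamily (μ : Cardinal.{u}) {α : Type u} (𝒜 : Set (Set α)) : Prop :=
  #(⋃₀ 𝒜) = μ ∧ (∀ A ∈ 𝒜, #A = μ) ∧
    ∀ A ∈ 𝒜, ∀ B ∈ 𝒜, A ≠ B → #(↥(A ∩ B)) < μ

/-- `𝒜` is maximal `μ`-almost disjoint: it is `μ`-ad and no new set `C ⊆ ⋃₀ 𝒜`
can be added keeping the family `μ`-almost disjoint. -/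
def IsMadFamily (μ : Cardinal.{u}) {α : Type u} (𝒜 : Set (Set α)) : Prop :=
  IsADFamily μ 𝒜 ∧ ¬∃ C, C ⊆ ⋃₀ 𝒜 ∧ C ∉ 𝒜 ∧ IsADFamily μ (insert C 𝒜)

/-- `MADSet μ` is the set of cardinalities of nontrivial `μ`-mad families,
i.e. `μ`-mad families with at least `cf μ` members. -/
def MADSet (μ : Cardinal.{u}) : Set Cardinal.{u} :=
  {c | ∃ 𝒜 : Set (Set μ.out), IsMadFamily μ 𝒜 ∧ μ.ord.cof ≤ #𝒜 ∧ #𝒜 = c}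

section AlmostDisjoint

variable {μ : Cardinal.{u}} {α β : Type u}

lemma mk_lt_of_subset_union (hμ : ℵ₀ ≤ μ) {s t r : Set α} (h : s ⊆ t ∪ r)
    (ht : #t < μ) (hr : #r < μ) : #s < μ :=
  ((mk_le_mk_of_subset h).trans (mk_union_le _ _)).trans_lt (add_lt_of_lt hμ ht hr)

lemma mk_iUnion_lt_of_lt_cof (hμ : ℵ₀ ≤ μ) {ι : Type u} (s : ι → Set α)
    (hι : #ι < μ.ord.cof) (h : ∀ i, #(s i) < μ) : #(⋃ i, s i) < μ :=
  (mk_iUnion_le s).trans_lt <|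
    mul_lt_of_lt hμ (hι.trans_le (Ordinal.cof_ord_le μ)) (iSup_lt_of_lt_cof_ord hι h)

/-- Maximality in terms of witnesses: every subset of the union of size `μ` meets some member in
`μ` points. -/
lemma isMadFamily_iff {𝒜 : Set (Set α)} :
    IsMadFamily μ 𝒜 ↔
      IsADFamily μ 𝒜 ∧ ∀ C ⊆ ⋃₀ 𝒜, #C = μ → ∃ A ∈ 𝒜, μ ≤ #(↥(C ∩ A)) := by
  constructor
  · rintro ⟨had, hmax⟩
    refine ⟨had, fun C hC hCμ => ?_⟩
    by_contra! hcon
    have hC𝒜 : C ∉ 𝒜 := fun h => by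
      have := hcon C h
      rw [Set.inter_self, hCμ] at this
      exact this.false
    refine hmax ⟨C, hC, hC𝒜, ?_, ?_, ?_⟩
    · rw [Set.sUnion_insert, Set.union_eq_self_of_subset_left hC]
      exact had.1
    · rintro A (rfl | hA)
      · exact hCμ
      · exact had.2.1 A hA
    · rintro A (rfl | hA) B (rfl | hB) hne
      · exact absurd rfl hne
      · exact hcon B hB
      · rw [Set.inter_comm]
        exact hcon A hA
      · exact had.2.2 A hA B hB hne
  · rintro ⟨had, hmax⟩
    refine ⟨had, ?_⟩
    rintro ⟨C, hC, hC𝒜, hins⟩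
    obtain ⟨A, hA, hle⟩ := hmax C hC (hins.2.1 C (Set.mem_insert _ _))
    refine hle.not_gt (hins.2.2 C (Set.mem_insert _ _) A (Set.mem_insert_of_mem _ hA) ?_)
    rintro rfl
    exact hC𝒜 hA

lemma exists_mad_extension {𝒜 : Set (Set α)} (had : IsADFamily μ 𝒜) :
    ∃ 𝒟, 𝒜 ⊆ 𝒟 ∧ IsMadFamily μ 𝒟 := by
  obtain ⟨𝒟, h𝒜𝒟, hmax⟩ := zorn_subset_nonempty
    {𝒟 : Set (Set α) | IsADFamily μ 𝒟 ∧ ⋃₀ 𝒟 = ⋃₀ 𝒜} (by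
      intro c hc hchain hne
      have hU : ⋃₀ ⋃₀ c = ⋃₀ 𝒜 := by
        apply Set.Subset.antisymm
        · rintro x ⟨A, ⟨𝒟, h𝒟, hA⟩, hx⟩
          rw [← (hc h𝒟).2]
          exact ⟨A, hA, hx⟩
        · obtain ⟨𝒟, h𝒟⟩ := hne
          rw [← (hc h𝒟).2]
          exact Set.sUnion_subset_sUnion (Set.subset_sUnion_of_mem h𝒟)
      refine ⟨⋃₀ c, ⟨⟨?_, ?_, ?_⟩, hU⟩, fun s hs => Set.subset_sUnion_of_mem hs⟩
      · rw [hU]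
        exact had.1
      · rintro A ⟨𝒟, h𝒟, hA⟩
        exact (hc h𝒟).1.2.1 A hA
      · rintro A ⟨𝒟, h𝒟, hA⟩ B ⟨ℰ, hℰ, hB⟩ hAB
        rcases hchain.total h𝒟 hℰ with h | h
        · exact (hc hℰ).1.2.2 A (h hA) B hB hAB
        · exact (hc h𝒟).1.2.2 A hA B (h hB) hAB) 𝒜 ⟨had, rfl⟩
  refine ⟨𝒟, h𝒜𝒟, hmax.prop.1, ?_⟩
  rintro ⟨C, hC, hC𝒟, hins⟩
  refine hC𝒟 (hmax.le_of_ge ⟨hins, ?_⟩ (Set.subset_insert _ _) (Set.mem_insert _ _))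
  rw [Set.sUnion_insert, Set.union_eq_self_of_subset_left hC, hmax.prop.2]

/-- The underlying set of a nontrivial mad family is immaterial: a mad family living on any type
is counted by `MADSet`, which only mentions families on `μ.out`. -/
lemma mk_mem_MADSet {𝒜 : Set (Set α)} (h : IsMadFamily μ 𝒜) (hcof : μ.ord.cof ≤ #𝒜) :
    #𝒜 ∈ MADSet μ := by
  rw [isMadFamily_iff] at h
  obtain ⟨had, hmax⟩ := h
  obtain ⟨e⟩ : Nonempty (μ.out ≃ ↥(⋃₀ 𝒜)) := by
    rw [← Cardinal.eq, mk_out, had.1]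
  let g : μ.out → α := fun x => e x
  have hg : Function.Injective g := Subtype.val_injective.comp e.injective
  have hrange : Set.range g = ⋃₀ 𝒜 := by
    ext x
    constructor
    · rintro ⟨y, rfl⟩
      exact (e y).2
    · intro hx
      exact ⟨e.symm ⟨x, hx⟩, by simp [g]⟩
  have hsub : ∀ A ∈ 𝒜, A ⊆ Set.range g := fun A hA => by
    rw [hrange]
    exact Set.subset_sUnion_of_mem hA
  have hinj : Set.InjOn (Set.preimage g) 𝒜 := fun A hA B hB hAB => by
    rw [← Set.image_preimage_eq_of_subset (hsub A hA),
      ← Set.image_preimage_eq_of_subset (hsub B hB), hAB]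
  have hcard : #(Set.preimage g '' 𝒜) = #𝒜 := mk_image_eq_of_injOn _ _ hinj
  have hU : ⋃₀ (Set.preimage g '' 𝒜) = Set.univ := by
    rw [Set.eq_univ_iff_forall]
    intro x
    obtain ⟨A, hA, hx⟩ : g x ∈ ⋃₀ 𝒜 := hrange ▸ Set.mem_range_self x
    exact ⟨_, ⟨A, hA, rfl⟩, hx⟩
  refine ⟨Set.preimage g '' 𝒜, isMadFamily_iff.2 ⟨⟨?_, ?_, ?_⟩, ?_⟩, hcard ▸ hcof, hcard⟩
  · rw [hU, mk_univ, mk_out]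
  · rintro _ ⟨A, hA, rfl⟩
    rw [mk_preimage_of_injective_of_subset_range g A hg (hsub A hA), had.2.1 A hA]
  · rintro _ ⟨A, hA, rfl⟩ _ ⟨B, hB, rfl⟩ hne
    rw [← Set.preimage_inter]
    refine (mk_preimage_of_injective g _ hg).trans_lt (had.2.2 A hA B hB ?_)
    rintro rfl
    exact hne rfl
  · intro C _ hC
    obtain ⟨A, hA, hle⟩ := hmax (g '' C) (hrange ▸ Set.image_subset_range g C)
      ((mk_image_eq hg).trans hC)
    refine ⟨_, ⟨A, hA, rfl⟩, hle.trans ?_⟩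
    rw [← Set.image_inter_preimage, mk_image_eq hg]

/-- Two `μ`-almost disjoint sequences, indexed by a well-order whose proper initial segments are
smaller than `cf μ`, can be matched by a map which is injective on the union of the first and pulls
`B i` back to `A i` up to fewer than `μ` points: `x` is sent into `B i \ ⋃ j < i, B j` for the least
`i` with `x ∈ A i`. -/
lemma exists_matching [Nonempty β] (hμ : ℵ₀ ≤ μ) {ι : Type u} [LinearOrder ι] [WellFoundedLT ι]
    (hι : ∀ i : ι, #(Set.Iio i) < μ.ord.cof) (A : ι → Set α) (B : ι → Set β)
    (hA : ∀ i, #(A i) = μ) (hB : ∀ i, #(B i) = μ)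
    (hAA : ∀ i j, i ≠ j → #(↥(A i ∩ A j)) < μ) (hBB : ∀ i j, i ≠ j → #(↥(B i ∩ B j)) < μ) :
    ∃ f : α → β, Set.InjOn f (⋃ i, A i) ∧ Set.MapsTo f (⋃ i, A i) (⋃ i, B i) ∧
      (∀ i, #(↥(A i \ f ⁻¹' B i)) < μ) ∧
      ∀ i, #(↥(((⋃ j, A j) ∩ f ⁻¹' B i) \ A i)) < μ := by
  classical
  have hAlt : ∀ i, #(⋃ j : Set.Iio i, A i ∩ A j) < μ := fun i =>
    mk_iUnion_lt_of_lt_cof hμ _ (hι i) fun j => hAA _ _ (ne_of_gt j.2)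
  have hBlt : ∀ i, #(⋃ j : Set.Iio i, B i ∩ B j) < μ := fun i =>
    mk_iUnion_lt_of_lt_cof hμ _ (hι i) fun j => hBB _ _ (ne_of_gt j.2)
  have hB' : ∀ i, μ ≤ #(↥(B i \ ⋃ j : Set.Iio i, B i ∩ B j)) := fun i => by
    by_contra! hlt
    refine (mk_lt_of_subset_union hμ (s := B i) ?_ hlt (hBlt i)).ne (hB i)
    rw [Set.sdiff_union_self]
    exact Set.subset_union_left
  have hemb : ∀ i, Nonempty (↥(A i) ↪ ↥(B i \ ⋃ j : Set.Iio i, B i ∩ B j)) := fun i => by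
    rw [← Cardinal.le_def, hA i]
    exact hB' i
  let g : ∀ i, ↥(A i) ↪ ↥(B i \ ⋃ j : Set.Iio i, B i ∩ B j) := fun i => (hemb i).some
  -- `l x` is the least index of a member of the first sequence containing `x`.
  have hleast : ∀ x : ↥(⋃ i, A i), ∃ i, (x : α) ∈ A i ∧ ∀ j < i, (x : α) ∉ A j := fun x => by
    obtain ⟨i, hi⟩ := Set.mem_iUnion.1 x.2
    obtain ⟨m, hm, hmin⟩ := wellFounded_lt.has_min {i | (x : α) ∈ A i} ⟨i, hi⟩
    exact ⟨m, hm, fun j hj hjA => hmin j hjA hj⟩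
  choose l hl hlmin using hleast
  obtain ⟨b₀⟩ := ‹Nonempty β›
  let f : α → β := fun x => if h : x ∈ ⋃ i, A i then g (l ⟨x, h⟩) ⟨x, hl ⟨x, h⟩⟩ else b₀
  have hf : ∀ x : ↥(⋃ i, A i), f x = g (l x) ⟨x, hl x⟩ := fun x => dif_pos x.2
  have hfB : ∀ x : ↥(⋃ i, A i), f x ∈ B (l x) := fun x => by
    rw [hf]
    exact (g (l x) ⟨x, hl x⟩).2.1
  have hfB' : ∀ x : ↥(⋃ i, A i), ∀ j < l x, f x ∉ B j := fun x j hj hmem => by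
    have h := (g (l x) ⟨x, hl x⟩).2.2
    rw [← hf] at h
    exact h (Set.mem_iUnion.2 ⟨⟨j, hj⟩, hfB x, hmem⟩)
  have hinj : Set.InjOn f (⋃ i, A i) := by
    intro x hx y hy hxy
    lift x to ↥(⋃ i, A i) using hx
    lift y to ↥(⋃ i, A i) using hy
    have hlxy : l x = l y := by
      rcases lt_trichotomy (l x) (l y) with h | h | h
      · exact absurd (hxy ▸ hfB x) (hfB' y _ h)
      · exact h
      · exact absurd (hxy ▸ hfB y) (hfB' x _ h)
    have key : ∀ i (h : l x = i) (hy' : (y : α) ∈ A i),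
        (g i ⟨y, hy'⟩ : β) = g (l x) ⟨x, hl x⟩ → (x : α) = y := by
      rintro i rfl hy' h
      exact (congrArg Subtype.val ((g (l x)).injective (Subtype.ext h))).symm
    exact key (l y) hlxy (hl y) (by rw [← hf, ← hf, hxy])
  refine ⟨f, hinj, fun x hx => Set.mem_iUnion.2 ⟨_, hfB ⟨x, hx⟩⟩, fun i => ?_, fun i => ?_⟩
  · refine (mk_le_mk_of_subset ?_).trans_lt (hAlt i)
    rintro x ⟨hxA, hxB⟩
    have hx : x ∈ ⋃ i, A i := Set.mem_iUnion.2 ⟨i, hxA⟩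
    lift x to ↥(⋃ i, A i) using hx
    have hlt : l x < i := by
      rcases lt_trichotomy (l x) i with h | h | h
      · exact h
      · exact absurd (h ▸ hfB x) hxB
      · exact absurd hxA (hlmin x i h)
    exact Set.mem_iUnion.2 ⟨⟨l x, hlt⟩, hxA, hl x⟩
  · rw [← mk_image_eq_of_injOn f _ (hinj.mono fun x hx => hx.1.1)]
    refine (mk_le_mk_of_subset ?_).trans_lt (hBlt i)
    rintro _ ⟨x, ⟨⟨hx, hxB⟩, hxA⟩, rfl⟩
    lift x to ↥(⋃ i, A i) using hx
    have hlt : l x < i := by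
      rcases lt_trichotomy (l x) i with h | h | h
      · exact h
      · exact absurd (h ▸ hl x) hxA
      · exact absurd hxB (hfB' x i h)
    exact Set.mem_iUnion.2 ⟨⟨l x, hlt⟩, hxB, hfB x⟩

end AlmostDisjoint

/-- Every μ-ad family of size cf(μ) extends to a μ-mad family of size 𝔞_μ
with the same union. -/
theorem stmt4 (μ : Cardinal.{u}) (hμ : ℵ₀ ≤ μ) {α : Type u} (𝒜 : Set (Set α))
    (had : IsADFamily μ 𝒜) (hcard : #𝒜 = μ.ord.cof) :
    ∃ 𝒜' : Set (Set α), 𝒜 ⊆ 𝒜' ∧ IsMadFamily μ 𝒜' ∧ #𝒜' = sInf (MADSet μ) ∧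
      ⋃₀ 𝒜' = ⋃₀ 𝒜 := by
  obtain ⟨𝒟, h𝒜𝒟, h𝒟⟩ := exists_mad_extension had
  have hne : (MADSet μ).Nonempty :=
    ⟨_, mk_mem_MADSet h𝒟 (hcard ▸ mk_le_mk_of_subset h𝒜𝒟)⟩
  obtain ⟨ℬ, hℬ, hℬcof, hℬcard⟩ := csInf_mem hne
  rw [isMadFamily_iff] at hℬ
  obtain ⟨hℬad, hℬmax⟩ := hℬ
  have : Nonempty μ.out := by
    rw [← mk_ne_zero_iff, mk_out]
    exact (aleph0_pos.trans_le hμ).ne'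
  let ι : Type u := μ.ord.cof.ord.ToType
  have hιcard : #ι = μ.ord.cof := mk_ord_toType _
  obtain ⟨a⟩ : Nonempty (ι ≃ 𝒜) := by
    rw [← Cardinal.eq, hιcard, hcard]
  obtain ⟨b⟩ : Nonempty (ι ↪ ℬ) := by
    rw [← Cardinal.le_def, hιcard]
    exact hℬcof
  have hUa : ⋃ i, (a i : Set α) = ⋃₀ 𝒜 := by
    rw [Set.sUnion_eq_iUnion]
    exact a.surjective.iUnion_comp fun A : 𝒜 => (A : Set α)
  have hmem : ∀ A ∈ 𝒜, ∃ i, (a i : Set α) = A := fun A hA =>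
    ⟨a.symm ⟨A, hA⟩, by simp⟩
  obtain ⟨f, hinj, hmaps, hAB, hBA⟩ := exists_matching hμ (ι := ι)
    (fun i => (mk_Iio_lt i (by simp [ι])).trans_eq hιcard) (fun i => (a i : Set α)) (fun i => (b i : Set μ.out))
    (fun i => had.2.1 _ (a i).2) (fun i => hℬad.2.1 _ (b i).2)
    (fun i j hij => had.2.2 _ (a i).2 _ (a j).2 fun h => hij (a.injective (Subtype.ext h)))
    (fun i j hij => hℬad.2.2 _ (b i).2 _ (b j).2 fun h => hij (b.injective (Subtype.ext h)))
  rw [hUa] at hinj hmaps hBA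
  -- The pullback of a subset of `μ.out` to `⋃₀ 𝒜`.
  let p : Set μ.out → Set α := fun B => ⋃₀ 𝒜 ∩ f ⁻¹' B
  have hp_le : ∀ B : Set μ.out, #(p B) ≤ #B := fun B => by
    rw [← mk_image_eq_of_injOn f (p B) (hinj.mono Set.inter_subset_left)]
    refine mk_le_mk_of_subset ?_
    rintro _ ⟨x, hx, rfl⟩
    exact hx.2
  have hp_inter : ∀ B ∈ ℬ, ∀ B' ∈ ℬ, B ≠ B' → #(↥(p B ∩ p B')) < μ := fun B hB B' hB' hne => by
    refine ((mk_le_mk_of_subset ?_).trans (hp_le (B ∩ B'))).trans_lt (hℬad.2.2 B hB B' hB' hne)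
    rintro x ⟨⟨hx, hxB⟩, -, hxB'⟩
    exact ⟨hx, hxB, hxB'⟩
  let 𝒬 : Set (Set α) := {P | ∃ B ∈ ℬ, (∀ i, (b i : Set μ.out) ≠ B) ∧ #(p B) = μ ∧ p B = P}
  have hcross : ∀ A ∈ 𝒜, ∀ P ∈ 𝒬, #(↥(A ∩ P)) < μ := by
    rintro A hA _ ⟨B, hB, hBne, -, rfl⟩
    obtain ⟨i, rfl⟩ := hmem A hA
    refine mk_lt_of_subset_union hμ ?_ (hAB i) (hp_inter _ (b i).2 B hB (hBne i))
    rintro x ⟨hxA, hxB⟩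
    by_cases h : f x ∈ (b i : Set μ.out)
    · exact Or.inr ⟨⟨hxB.1, h⟩, hxB⟩
    · exact Or.inl ⟨hxA, h⟩
  have hU : ⋃₀ (𝒜 ∪ 𝒬) = ⋃₀ 𝒜 := by
    rw [Set.sUnion_union, Set.union_eq_left]
    rintro x ⟨_, ⟨B, -, -, -, rfl⟩, hx⟩
    exact hx.1
  have hmad : IsMadFamily μ (𝒜 ∪ 𝒬) := by
    refine isMadFamily_iff.2 ⟨⟨hU ▸ had.1, ?_, ?_⟩, ?_⟩
    · rintro A (hA | ⟨B, -, -, hμB, rfl⟩)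
      · exact had.2.1 A hA
      · exact hμB
    · rintro A (hA | hA) A' (hA' | hA') hne
      · exact had.2.2 A hA A' hA' hne
      · exact hcross A hA A' hA'
      · rw [Set.inter_comm]
        exact hcross A' hA' A hA
      · obtain ⟨B, hB, -, -, rfl⟩ := hA
        obtain ⟨B', hB', -, -, rfl⟩ := hA'
        exact hp_inter B hB B' hB' fun h => hne (h ▸ rfl)
    · intro C hC hCμ
      rw [hU] at hC
      obtain ⟨B, hB, hle⟩ := hℬmax (f '' C)
        (by
          rintro _ ⟨x, hx, rfl⟩
          obtain ⟨i, hi⟩ := Set.mem_iUnion.1 (hmaps (hC hx))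
          exact ⟨_, (b i).2, hi⟩)
        ((mk_image_eq_of_injOn f C (hinj.mono hC)).trans hCμ)
      have hCp : μ ≤ #(↥(C ∩ p B)) := by
        refine hle.trans ((mk_le_mk_of_subset ?_).trans (mk_image_le (f := f)))
        rintro _ ⟨⟨x, hx, rfl⟩, hxB⟩
        exact ⟨x, ⟨hx, hC hx, hxB⟩, rfl⟩
      by_cases hex : ∃ i, (b i : Set μ.out) = B
      · obtain ⟨i, rfl⟩ := hex
        refine ⟨a i, Or.inl (a i).2, ?_⟩
        by_contra! hlt
        refine hCp.not_gt (mk_lt_of_subset_union hμ ?_ hlt (hBA i))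
        rintro x ⟨hxC, hxp⟩
        by_cases h : x ∈ (a i : Set α)
        · exact Or.inl ⟨hxC, h⟩
        · exact Or.inr ⟨hxp, h⟩
      · refine ⟨p B, Or.inr ⟨B, hB, not_exists.1 hex, ?_, rfl⟩, hCp⟩
        exact le_antisymm ((hp_le B).trans (hℬad.2.1 B hB).le)
          (hCp.trans (mk_le_mk_of_subset Set.inter_subset_right))
  refine ⟨𝒜 ∪ 𝒬, Set.subset_union_left, hmad, le_antisymm ?_ ?_, hU⟩
  · classical
    -- Each member is either some `a i`, assigned to `b i`, or the pullback of some other `B ∈ ℬ`.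
    let q : Set μ.out → Set α := fun B =>
      if h : ∃ i, (b i : Set μ.out) = B then a h.choose else p B
    rw [← hℬcard]
    refine (mk_le_mk_of_subset (t := q '' ℬ) ?_).trans mk_image_le
    rintro A (hA | ⟨B, hB, hBne, -, rfl⟩)
    · obtain ⟨i, rfl⟩ := hmem A hA
      have h : ∃ j, (b j : Set μ.out) = b i := ⟨i, rfl⟩
      refine ⟨b i, (b i).2, ?_⟩
      have hi : h.choose = i := b.injective (Subtype.ext h.choose_spec)
      simp only [q, dif_pos h, hi]
    · exact ⟨B, hB, dif_neg (not_exists.2 hBne)⟩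
  · exact csInf_le' (mk_mem_MADSet hmad (hcard ▸ mk_le_mk_of_subset Set.subset_union_left))
end

section
/- For every singular cardinal μ it holds that 𝔞_μ ≤ 𝔞_{cf μ}. -/
/-!
Let `κ = cf μ < μ`. Write `μ` as a disjoint union of blocks `I i`, `i < κ`, each of size `< μ`, whose
sizes form a *ladder*: for every `ν < μ`, fewer than `κ` blocks have size `≤ ν`
(`exists_ladder`, `exists_fibration`; the blocks are the fibres of a map `p`). A union of fewer than
`κ` blocks has size `< μ`, while a union of `κ` blocks has size `μ`.

Given a `κ`-mad family `𝒜` on the index set, the sets `⋃ i ∈ A, I i` for `A ∈ 𝒜` are therefore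
`μ`-almost disjoint. They form a maximal family (`mem_MADSet_of_mem`): if `C` has size `μ`, then for
every `j` some block `I (f j)` satisfies `|C ∩ I (f j)| ≥ |I j|`, and `range f` has size `κ`, so it
meets some `A ∈ 𝒜` in `κ` many points; the corresponding blocks contribute `μ` many points of `C`.
Hence `MADSet κ ⊆ MADSet μ`.

Since the infimum of the empty set of cardinals is `0`, it is also needed that `MADSet κ` is
nonempty (`MADSet_nonempty`): by Zorn's lemma a partition of `κ` into `κ` many sets of size `κ`
extends to a `κ`-mad family.
-/

universe u
open Cardinal

/-- Every infinite `κ` carries a nontrivial `κ`-mad family, obtained by extending a partition into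
`κ` many pieces of size `κ`. -/
lemma MADSet_nonempty (κ : Cardinal.{u}) (hκ : ℵ₀ ≤ κ) : (MADSet κ).Nonempty := by
  have hk : #κ.out = κ := mk_out κ
  obtain ⟨e⟩ : Nonempty (κ.out ≃ κ.out × κ.out) := by
    rw [← Cardinal.eq, mk_prod, lift_id, hk, mul_eq_self hκ]
  let F : κ.out → Set κ.out := fun i => {x | (e x).1 = i}
  have hFc : ∀ i, #(F i) = κ := by
    intro i
    refine Eq.trans ?_ hk
    refine mk_congr ⟨fun x => (e x.1).2, fun y => ⟨e.symm (i, y), by simp [F]⟩, ?_, ?_⟩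
    · rintro ⟨x, rfl⟩
      simp
    · intro y
      simp
  have hκ0 : κ ≠ 0 := (aleph0_pos.trans_le hκ).ne'
  have hFinj : Function.Injective F := by
    intro i j hij
    have : #(F i) ≠ 0 := by rw [hFc]; exact hκ0
    obtain ⟨x, hx⟩ := mk_ne_zero_iff.1 this
    have hx' : x ∈ F j := hij ▸ hx
    exact hx.symm.trans hx'
  have hPU : ⋃₀ Set.range F = Set.univ := by
    ext x
    simp [F]
  have hP : IsADFamily κ (Set.range F) := by
    refine ⟨by rw [hPU, mk_univ, hk], ?_, ?_⟩
    · rintro _ ⟨i, rfl⟩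
      exact hFc i
    · rintro _ ⟨i, rfl⟩ _ ⟨j, rfl⟩ hij
      have : F i ∩ F j = ∅ := by
        ext x
        simp only [F, Set.mem_inter_iff, Set.mem_ofPred_eq, Set.mem_empty_iff_false, iff_false]
        rintro ⟨rfl, h⟩
        exact hij (by rw [h])
      rw [this]
      simpa using aleph0_pos.trans_le hκ
  obtain ⟨m, hm, hmax⟩ := zorn_subset_nonempty {𝒜 | Set.range F ⊆ 𝒜 ∧ IsADFamily κ 𝒜} (by
    intro c hc hchain hne
    refine ⟨⋃₀ c, ⟨?_, ?_, ?_, ?_⟩, fun s hs => Set.subset_sUnion_of_mem hs⟩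
    · obtain ⟨s, hs⟩ := hne
      exact (hc hs).1.trans (Set.subset_sUnion_of_mem hs)
    · obtain ⟨s, hs⟩ := hne
      have : ⋃₀ (⋃₀ c) = Set.univ := by
        refine Set.eq_univ_of_forall fun x => ?_
        have : x ∈ ⋃₀ Set.range F := by rw [hPU]; trivial
        exact Set.sUnion_subset_sUnion ((hc hs).1.trans (Set.subset_sUnion_of_mem hs)) this
      rw [this, mk_univ, hk]
    · rintro A ⟨s, hs, hA⟩
      exact (hc hs).2.2.1 A hA
    · rintro A ⟨s, hs, hA⟩ B ⟨t, ht, hB⟩ hAB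
      rcases hchain.total hs ht with h | h
      · exact (hc ht).2.2.2 A (h hA) B hB hAB
      · exact (hc hs).2.2.2 A hA B (h hB) hAB) (Set.range F) ⟨subset_rfl, hP⟩
  refine ⟨#m, m, ⟨hmax.prop.2, ?_⟩, ?_, rfl⟩
  · rintro ⟨C, -, hCm, hC⟩
    exact hCm (hmax.le_of_ge ⟨hm.trans (Set.subset_insert _ _), hC⟩ (Set.subset_insert _ _)
      (Set.mem_insert _ _))
  · calc κ.ord.cof ≤ κ := by simpa using Ordinal.cof_le_card κ.ord
      _ = #(Set.range F) := by rw [mk_range_eq F hFinj, hk]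
      _ ≤ #m := mk_le_mk_of_subset hm

/-- A singular cardinal is a limit cardinal. -/
lemma succ_lt_of_singular {μ ν : Cardinal.{u}} (hμ : ℵ₀ ≤ μ) (hsing : μ.ord.cof < μ)
    (hν : ν < μ) : Order.succ ν < μ := by
  refine lt_of_le_of_ne (Order.succ_le_of_lt hν) fun h => ?_
  rcases lt_or_ge ν ℵ₀ with h0 | h0
  · exact absurd (h ▸ isSuccLimit_aleph0.succ_lt h0) hμ.not_gt
  · have := (isRegular_succ h0).cof_ord
    rw [h] at this
    exact hsing.ne this

/-- On any index set `U` of size `cf μ` there are cardinals `g i < μ` such that fewer than `cf μ`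
of them are bounded by any given `ν < μ`. -/
lemma exists_ladder {μ : Cardinal.{u}} (hμ : ℵ₀ ≤ μ) (hsing : μ.ord.cof < μ)
    (U : Type u) (hU : #U = μ.ord.cof) :
    ∃ g : U → Cardinal.{u}, (∀ i, g i < μ) ∧ ∀ ν < μ, #{i | g i ≤ ν} < μ.ord.cof := by
  obtain ⟨S, hS, hSt⟩ := Ordinal.exists_ord_cof_eq μ.ord.ToType
  rw [Ordinal.cof_toType] at hSt
  have hSc : #S = μ.ord.cof := by
    simpa using congrArg Ordinal.card hSt
  have hlt : ∀ x : μ.ord.ToType, #(Set.Iio x) < μ := fun x => by simpa using mk_Iio_lt x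
  obtain ⟨e⟩ : Nonempty (U ≃ S) := by rw [← Cardinal.eq, hU, hSc]
  refine ⟨fun i => #(Set.Iio (e i).1), fun i => hlt _, fun ν hν => ?_⟩
  have hν' := succ_lt_of_singular hμ hsing hν
  -- the point of `μ.ord` with exactly `ν⁺` predecessors
  obtain ⟨x, hx⟩ : ∃ x : μ.ord.ToType, #(Set.Iio x) = Order.succ ν := by
    have hmem : (Order.succ ν).ord < Ordinal.type (α := μ.ord.ToType) (· < ·) := by
      simpa using hν'
    refine ⟨Ordinal.enum (α := μ.ord.ToType) (· < ·) ⟨_, hmem⟩, ?_⟩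
    have := congrArg Ordinal.card (Ordinal.typein_enum (α := μ.ord.ToType) (· < ·) hmem)
    rw [card_ord] at this
    exact this
  obtain ⟨t, ht, hxt⟩ := hS x
  have hIio : #(Set.Iio (⟨t, ht⟩ : S)) < μ.ord.cof := by
    rw [← hSc]
    exact mk_Iio_lt _ (by rw [hSt, hSc])
  refine lt_of_le_of_lt ?_ hIio
  refine mk_le_of_injective (f := fun i => ⟨e i.1, ?_⟩) ?_
  · have hi : #(Set.Iio (e i.1).1) ≤ ν := i.2
    by_contra hcon
    have hle : t ≤ (e i.1).1 := not_lt.1 hcon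
    have : Order.succ ν ≤ ν := by
      rw [← hx]
      exact (mk_le_mk_of_subset (Set.Iio_subset_Iio (hxt.trans hle))).trans hi
    exact (Order.lt_succ ν).not_ge this
  · intro i j hij
    exact Subtype.ext (e.injective (Subtype.ext_iff.1 hij))

/-- The ladder of `exists_ladder` realised by the fibres of a map from a set of size `μ`. -/
lemma exists_fibration {μ : Cardinal.{u}} (hμ : ℵ₀ ≤ μ) (hsing : μ.ord.cof < μ)
    (U : Type u) (hU : #U = μ.ord.cof) :
    ∃ p : μ.out → U, (∀ i, #(p ⁻¹' {i}) < μ) ∧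
      ∀ ν < μ, #{i | #(p ⁻¹' {i}) ≤ ν} < μ.ord.cof := by
  obtain ⟨g, hg, hg'⟩ := exists_ladder hμ hsing U hU
  have hcard : #(Σ i, (g i).out) = μ := by
    rw [mk_sigma]
    simp only [mk_out]
    apply le_antisymm
    · calc sum g ≤ #U * ⨆ i, g i := sum_le_mk_mul_iSup g
        _ ≤ μ * μ := mul_le_mul' (hU ▸ hsing.le) (ciSup_le' fun i => (hg i).le)
        _ = μ := mul_eq_self hμ
    · by_contra hcon
      have h := hg' _ (not_le.1 hcon)
      rw [show {i | g i ≤ sum g} = Set.univ from Set.eq_univ_of_forall fun i => le_sum g i,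
        mk_univ, hU] at h
      exact h.false
  obtain ⟨e⟩ : Nonempty (μ.out ≃ Σ i, (g i).out) := by rw [← Cardinal.eq, hcard, mk_out]
  have hfib : ∀ i, #((fun x => (e x).1) ⁻¹' {i}) = g i := by
    intro i
    rw [← mk_out (g i)]
    refine (mk_congr ⟨fun y => ⟨e.symm ⟨i, y⟩, by simp⟩, fun x => x.2 ▸ (e x.1).2, ?_, ?_⟩).symm
    · intro y
      have : ∀ (z : Σ i, (g i).out) (hz : z = ⟨i, y⟩) (h : z.1 = i), h ▸ z.2 = y := by
        rintro _ rfl _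
        rfl
      exact this _ (e.apply_symm_apply _) _
    · rintro ⟨x, rfl⟩
      exact Subtype.ext (e.symm_apply_apply x)
  refine ⟨fun x => (e x).1, fun i => by rw [hfib]; exact hg i, fun ν hν => ?_⟩
  simp only [hfib]
  exact hg' ν hν

lemma mem_MADSet_of_mem {μ : Cardinal.{u}} (hμ : ℵ₀ ≤ μ) (hsing : μ.ord.cof < μ)
    {c : Cardinal.{u}} (hc : c ∈ MADSet μ.ord.cof) : c ∈ MADSet μ := by
  obtain ⟨𝒜, ⟨⟨hU, hsz, had⟩, hmax⟩, hcof, rfl⟩ := hc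
  rw [Ordinal.cof_ord_cof] at hcof
  obtain ⟨p, hp, hp'⟩ := exists_fibration hμ hsing _ hU
  -- every set of `cf μ` many indices has a block of size above any given `ν < μ`
  have hbig : ∀ Y : Set (⋃₀ 𝒜), μ.ord.cof ≤ #Y → ∀ ν < μ, ∃ i ∈ Y, ν < #(p ⁻¹' {i}) := by
    intro Y hY ν hν
    by_contra! hcon
    exact ((hY.trans (mk_le_mk_of_subset hcon)).trans_lt (hp' ν hν)).false
  have hsmall : ∀ Y : Set (⋃₀ 𝒜), #Y < μ.ord.cof → #(p ⁻¹' Y) < μ := by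
    intro Y hY
    have h1 : p ⁻¹' Y = ⋃ i ∈ Y, p ⁻¹' {i} := by
      ext x
      simp
    rw [h1]
    refine (mk_biUnion_le _ _).trans_lt (mul_lt_of_lt hμ (hY.trans hsing) ?_)
    exact iSup_lt_of_lt_cof_ord hY fun i => hp _
  have hfull : ∀ Y : Set (⋃₀ 𝒜), μ.ord.cof ≤ #Y → #(p ⁻¹' Y) = μ := by
    intro Y hY
    refine le_antisymm ((mk_set_le _).trans (mk_out μ).le) ?_
    by_contra! hcon
    obtain ⟨i, hi, hlt⟩ := hbig Y hY _ hcon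
    exact hlt.not_ge (mk_le_mk_of_subset (Set.preimage_mono (Set.singleton_subset_iff.2 hi)))
  -- the block union attached to `A`
  let B : Set μ.ord.cof.out → Set μ.out := fun A => {x | (p x).1 ∈ A}
  have htr : ∀ A ⊆ ⋃₀ 𝒜, #{i : ⋃₀ 𝒜 | i.1 ∈ A} = #A := by
    intro A hA
    exact mk_congr ⟨fun i => ⟨i.1.1, i.2⟩, fun a => ⟨⟨a.1, hA a.2⟩, a.2⟩, fun _ => rfl,
      fun _ => rfl⟩
  have hsub : ∀ A ∈ 𝒜, A ⊆ ⋃₀ 𝒜 := fun A hA => Set.subset_sUnion_of_mem hA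
  have hBsz : ∀ A ∈ 𝒜, #(B A) = μ := fun A hA =>
    hfull {i | i.1 ∈ A} (by rw [htr A (hsub A hA), hsz A hA])
  have hBad : ∀ A ∈ 𝒜, ∀ A' ∈ 𝒜, A ≠ A' → #(↥(B A ∩ B A')) < μ := by
    intro A hA A' hA' hne
    refine hsmall {i | i.1 ∈ A ∩ A'} ?_
    rw [htr _ (Set.inter_subset_left.trans (hsub A hA))]
    exact had A hA A' hA' hne
  have hBinj : Set.InjOn B 𝒜 := by
    intro A hA A' hA' heq
    by_contra hne
    have := hBad A hA A' hA' hne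
    rw [← heq, Set.inter_self, hBsz A hA] at this
    exact this.false
  have hBU : ⋃₀ (B '' 𝒜) = Set.univ := by
    refine Set.eq_univ_of_forall fun x => ?_
    obtain ⟨A, hA, hx⟩ := (p x).2
    exact ⟨B A, ⟨A, hA, rfl⟩, hx⟩
  refine ⟨B '' 𝒜, ⟨⟨by rw [hBU, mk_univ, mk_out], ?_, ?_⟩, ?_⟩, ?_, ?_⟩
  · rintro _ ⟨A, hA, rfl⟩
    exact hBsz A hA
  · rintro _ ⟨A, hA, rfl⟩ _ ⟨A', hA', rfl⟩ hne
    exact hBad A hA A' hA' fun h => hne (by rw [h])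
  · rintro ⟨C, -, hCn, -, hCsz, hCad⟩
    have hC : #C = μ := hCsz C (Set.mem_insert _ _)
    have hex : ∀ j, ∃ i, #(p ⁻¹' {j}) ≤ #(↥(C ∩ p ⁻¹' {i})) := by
      intro j
      by_contra! hcon
      have h1 : C = ⋃ i, C ∩ p ⁻¹' {i} := by
        rw [← Set.inter_iUnion, ← Set.preimage_iUnion, Set.iUnion_of_singleton,
          Set.preimage_univ, Set.inter_univ]
      have h2 : #C < μ := by
        rw [h1]
        refine (mk_iUnion_le _).trans_lt (mul_lt_of_lt hμ (hU.trans_lt hsing) ?_)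
        exact (ciSup_le' fun i => (hcon i).le).trans_lt (hp j)
      exact h2.ne hC
    choose f hf using hex
    -- otherwise the blocks indexed by `range f` have fewer than `μ` points in total, yet they
    -- contain sets as large as every block
    have hrange : μ.ord.cof ≤ #(Set.range f) := by
      by_contra! hcon
      obtain ⟨j, -, hj⟩ := hbig Set.univ (by rw [mk_univ, hU]) _ (hsmall _ hcon)
      refine hj.not_ge ((hf j).trans (mk_le_mk_of_subset ?_))
      rintro x ⟨-, hx⟩
      exact ⟨j, hx.symm⟩
    let X : Set μ.ord.cof.out := Subtype.val '' Set.range f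
    have hXU : X ⊆ ⋃₀ 𝒜 := by
      rintro _ ⟨i, -, rfl⟩
      exact i.2
    have hXsz : #X = μ.ord.cof := by
      refine le_antisymm ((mk_set_le _).trans (mk_out _).le) ?_
      rwa [mk_image_eq Subtype.val_injective]
    obtain ⟨A, hA, hAX⟩ : ∃ A ∈ 𝒜, μ.ord.cof ≤ #(↥(X ∩ A)) := by
      by_contra! hcon
      have hXn : X ∉ 𝒜 := by
        intro hX
        have := hcon X hX
        rw [Set.inter_self, hXsz] at this
        exact this.false
      refine hmax ⟨X, hXU, hXn, ?_, ?_, ?_⟩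
      · rw [Set.sUnion_insert, Set.union_eq_right.2 hXU, hU]
      · rintro A (rfl | hA)
        · exact hXsz
        · exact hsz A hA
      · rintro A (rfl | hA) A' (rfl | hA') hne
        · exact absurd rfl hne
        · exact hcon A' hA'
        · rw [Set.inter_comm]
          exact hcon A hA
        · exact had A hA A' hA' hne
    have hJ : μ.ord.cof ≤ #{j | (f j).1 ∈ A} := by
      refine hAX.trans ?_
      refine mk_le_of_surjective (f := fun j => ⟨(f j.1).1, ⟨_, ⟨j.1, rfl⟩, rfl⟩, j.2⟩) ?_
      rintro ⟨_, ⟨_, ⟨j, rfl⟩, rfl⟩, hj⟩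
      exact ⟨⟨j, hj⟩, rfl⟩
    have hlt : #(↥(C ∩ B A)) < μ :=
      hCad C (Set.mem_insert _ _) (B A) (Set.mem_insert_of_mem _ ⟨A, hA, rfl⟩)
        fun h => hCn ⟨A, hA, h.symm⟩
    obtain ⟨j, hj, hjlt⟩ := hbig _ hJ _ hlt
    refine hjlt.not_ge ((hf j).trans (mk_le_mk_of_subset ?_))
    rintro x ⟨hxC, hx⟩
    refine ⟨hxC, ?_⟩
    have hx' : p x = f j := hx
    change (p x).1 ∈ A
    rw [hx']
    exact hj
  · rwa [mk_image_eq_of_injOn B 𝒜 hBinj]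
  · exact mk_image_eq_of_injOn B 𝒜 hBinj

/-- For every singular cardinal μ, 𝔞_μ ≤ 𝔞_{cf μ}. -/
theorem stmt19 (μ : Cardinal.{u}) (hμ : ℵ₀ ≤ μ) (hsing : μ.ord.cof < μ) :
    sInf (MADSet μ) ≤ sInf (MADSet μ.ord.cof) := by
  have hκ : ℵ₀ ≤ μ.ord.cof := by
    rw [Ordinal.aleph0_le_cof_iff, Ordinal.one_lt_cof_iff]
    exact isSuccLimit_ord hμ
  exact csInf_le' (mem_MADSet_of_mem hμ hsing (csInf_mem (MADSet_nonempty _ hκ)))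
end
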